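/- arXiv:2605.19101 — 2 statements merged into one kernel-verified Lean document; each statement's English description precedes it below -/
import Mathlib

section
/- (Inter-group Heterogeneity Bound, Lemma 2) Suppose the global heterogeneity bound (1/M) Σ_{m=1}^M ‖g_m − ḡ‖² ≤ β² ‖ḡ‖² + ζ² holds for nonnegative constants β, ζ, and let M_min = min_k M_k > 0. Then the inter-group variance satisfies the explicit bound (1/K) Σ_{k=1}^K ‖ḡ_k − ḡ‖² ≤ (M β² / (K M_min)) ‖ḡ‖² + (M ζ² / (K M_min)) − (1/(K M_min)) Σ_{k=1}^K Σ_{m∈G_k} ‖g_m − ḡ_k‖², where the subtracted nonnegative term is the total intra-group heterogeneity absorbed within the groups. -/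
open Finset

/-!
By the parallel axis identity, the spread of each group about any point `a` is its spread about its
own mean plus its total weight times the squared distance from that mean to `a`. Summing over
disjoint groups and bounding every group weight below by the smallest one isolates the inter-group
variance.
-/

theorem sum_smul_sub_centerMass_eq_zero {ι R E : Type*} [Field R] [AddCommGroup E] [Module R E]
    {w : ι → R} {s : Finset ι} (x : ι → E) (hw : ∑ i ∈ s, w i ≠ 0) :
    ∑ i ∈ s, w i • (x i - s.centerMass w x) = 0 := by
  simp only [smul_sub, sum_sub_distrib]
  rw [← sum_smul, centerMass, smul_inv_smul₀ hw, sub_self]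

section InnerProductSpace

variable {ι κ E : Type*} [NormedAddCommGroup E] [InnerProductSpace ℝ E]
  {w : ι → ℝ} {s : Finset ι} (x : ι → E)

theorem sum_mul_norm_sub_sq_eq_add_centerMass (hw : ∑ i ∈ s, w i ≠ 0) (a : E) :
    ∑ i ∈ s, w i * ‖x i - a‖ ^ 2 =
      ∑ i ∈ s, w i * ‖x i - s.centerMass w x‖ ^ 2 +
        (∑ i ∈ s, w i) * ‖s.centerMass w x - a‖ ^ 2 := by
  set c := s.centerMass w x
  have cross_term_eq_zero : ∑ i ∈ s, w i * inner ℝ (x i - c) (c - a) = 0 := by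
    simp only [← real_inner_smul_left]
    rw [← sum_inner, sum_smul_sub_centerMass_eq_zero x hw, inner_zero_left]
  have expand (i : ι) : w i * ‖x i - a‖ ^ 2 =
      w i * ‖x i - c‖ ^ 2 + 2 * (w i * inner ℝ (x i - c) (c - a)) + w i * ‖c - a‖ ^ 2 := by
    rw [← sub_add_sub_cancel (x i) c a, norm_add_sq_real]
    ring
  simp only [expand, sum_add_distrib, ← mul_sum, ← sum_mul, cross_term_eq_zero, mul_zero, add_zero]

theorem mul_sum_norm_centerMass_sub_sq_le {t : Finset κ} {G : κ → Finset ι} {n : ℝ}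
    (hdisj : (t : Set κ).PairwiseDisjoint G) (hsub : ∀ k ∈ t, G k ⊆ s)
    (hw : ∀ i ∈ s, 0 ≤ w i) (hn : 0 < n) (hG : ∀ k ∈ t, n ≤ ∑ i ∈ G k, w i) (a : E) :
    n * ∑ k ∈ t, ‖(G k).centerMass w x - a‖ ^ 2 ≤
      ∑ i ∈ s, w i * ‖x i - a‖ ^ 2 -
        ∑ k ∈ t, ∑ i ∈ G k, w i * ‖x i - (G k).centerMass w x‖ ^ 2 := by
  classical
  rw [le_sub_iff_add_le', mul_sum, ← sum_add_distrib]
  calc ∑ k ∈ t, (∑ i ∈ G k, w i * ‖x i - (G k).centerMass w x‖ ^ 2 +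
          n * ‖(G k).centerMass w x - a‖ ^ 2)
      ≤ ∑ k ∈ t, ∑ i ∈ G k, w i * ‖x i - a‖ ^ 2 := by
        refine sum_le_sum fun k hk ↦ ?_
        rw [sum_mul_norm_sub_sq_eq_add_centerMass x (hn.trans_le (hG k hk)).ne' a]
        gcongr
        exact hG k hk
    _ = ∑ i ∈ t.biUnion G, w i * ‖x i - a‖ ^ 2 := (sum_biUnion hdisj).symm
    _ ≤ ∑ i ∈ s, w i * ‖x i - a‖ ^ 2 :=
        sum_le_sum_of_subset_of_nonneg (biUnion_subset.2 hsub)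
          fun i hi _ ↦ mul_nonneg (hw i hi) (sq_nonneg _)

theorem inter_group_heterogeneity_bound_general
    [Fintype ι] [Fintype κ] [Nonempty κ] {G : κ → Finset ι} (hw : ∀ i, 0 ≤ w i)
    (hdisj : Pairwise (Function.onFun Disjoint G))
    {n : ℝ} (hn : 0 < n) (hG : ∀ k, n ≤ ∑ i ∈ G k, w i) (a : E) {V : ℝ}
    (hV : (∑ i, w i)⁻¹ * ∑ i, w i * ‖x i - a‖ ^ 2 ≤ V) :
    (Fintype.card κ : ℝ)⁻¹ * ∑ k, ‖(G k).centerMass w x - a‖ ^ 2 ≤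
      (Fintype.card κ * n)⁻¹ * ((∑ i, w i) * V -
        ∑ k, ∑ i ∈ G k, w i * ‖x i - (G k).centerMass w x‖ ^ 2) := by
  obtain ⟨k⟩ := ‹Nonempty κ›
  have total_weight_pos : 0 < ∑ i, w i :=
    hn.trans_le ((hG k).trans (sum_le_univ_sum_of_nonneg hw))
  rw [mul_inv, mul_assoc]
  gcongr
  rw [le_inv_mul_iff₀ hn]
  calc n * ∑ k, ‖(G k).centerMass w x - a‖ ^ 2
      ≤ ∑ i, w i * ‖x i - a‖ ^ 2 -
          ∑ k, ∑ i ∈ G k, w i * ‖x i - (G k).centerMass w x‖ ^ 2 :=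
        mul_sum_norm_centerMass_sub_sq_le x (hdisj.set_pairwise _) (fun k _ ↦ subset_univ (G k))
          (fun i _ ↦ hw i) hn (fun k _ ↦ hG k) a
    _ ≤ (∑ i, w i) * V - ∑ k, ∑ i ∈ G k, w i * ‖x i - (G k).centerMass w x‖ ^ 2 :=
        sub_le_sub_right ((inv_mul_le_iff₀ total_weight_pos).1 hV) _

end InnerProductSpace

/-- **Inter-group Heterogeneity Bound (Lemma 2).** If the global heterogeneity
bound `(1/M) Σ_m ‖g_m − ḡ‖² ≤ β²‖ḡ‖² + ζ²` holds and `M_min = min_k M_k > 0`,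
then the inter-group variance is bounded by
`(Mβ²/(K M_min))‖ḡ‖² + Mζ²/(K M_min) − (1/(K M_min)) Σ_k Σ_{m∈G_k} ‖g_m − ḡ_k‖²`. -/
theorem inter_group_heterogeneity_bound
    {E : Type*} [NormedAddCommGroup E] [InnerProductSpace ℝ E]
    {M K : ℕ} (hM : 0 < M) (hK : 0 < K)
    (g : Fin M → E)
    (G : Fin K → Finset (Fin M))
    (hdisj : ∀ k k' : Fin K, k ≠ k' → Disjoint (G k) (G k'))
    (hcover : ∀ m : Fin M, ∃ k, m ∈ G k)
    (hne : ∀ k, (G k).Nonempty)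
    (gbar : E) (hgbar : gbar = (M : ℝ)⁻¹ • ∑ m, g m)
    (gk : Fin K → E)
    (hgk : ∀ k, gk k = ((G k).card : ℝ)⁻¹ • ∑ m ∈ G k, g m)
    (Mmin : ℕ) (hMminpos : 0 < Mmin)
    (hMmin_le : ∀ k, Mmin ≤ (G k).card)
    (hMmin_attained : ∃ k, (G k).card = Mmin)
    (β ζ : ℝ) (hβ : 0 ≤ β) (hζ : 0 ≤ ζ)
    (hglobal : (M : ℝ)⁻¹ * ∑ m, ‖g m - gbar‖ ^ 2 ≤ β ^ 2 * ‖gbar‖ ^ 2 + ζ ^ 2) :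
    (K : ℝ)⁻¹ * ∑ k, ‖gk k - gbar‖ ^ 2
      ≤ (M : ℝ) * β ^ 2 / ((K : ℝ) * (Mmin : ℝ)) * ‖gbar‖ ^ 2
        + (M : ℝ) * ζ ^ 2 / ((K : ℝ) * (Mmin : ℝ))
        - ((K : ℝ) * (Mmin : ℝ))⁻¹ * ∑ k, ∑ m ∈ G k, ‖g m - gk k‖ ^ 2 := by
  have : Nonempty (Fin K) := Fin.pos_iff_nonempty.1 hK
  obtain rfl : gk = fun k ↦ (G k).centerMass (fun _ ↦ (1 : ℝ)) g := by
    ext k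
    simp [centerMass, hgk]
  have bound := inter_group_heterogeneity_bound_general g (fun _ ↦ zero_le_one) hdisj
    (Nat.cast_pos.2 hMminpos) (by simpa using hMmin_le) gbar (by simpa using hglobal)
  exact le_of_le_of_eq (by simpa using bound) (by ring)
end

section
/- (Corollary of Lemma 2) Suppose the global heterogeneity bound (1/M) Σ_{m=1}^M ‖g_m − ḡ‖² ≤ β² ‖ḡ‖² + ζ² holds for nonnegative constants β, ζ, and let M_min = min_k M_k > 0. Then there exist nonnegative constants β_g, ζ_g with β_g² ≤ M β² / (K M_min) and ζ_g² ≤ M ζ² / (K M_min) such that the inter-group heterogeneity bound (1/K) Σ_{k=1}^K ‖ḡ_k − ḡ‖² ≤ β_g² ‖ḡ‖² + ζ_g² holds. -/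
open Finset

/-!
By Jensen's inequality for the convex function `x ↦ ‖x - ḡ‖ ^ 2`, each group satisfies
`M_min ‖ḡ_k - ḡ‖ ^ 2 ≤ M_k ‖ḡ_k - ḡ‖ ^ 2 ≤ ∑ m ∈ G_k, ‖g_m - ḡ‖ ^ 2`. Summing over the disjoint
groups shows that passing to group means multiplies the mean squared deviation by at most
`M / (K M_min)`, so one may take `β_g = √(M / (K M_min)) β` and `ζ_g = √(M / (K M_min)) ζ`.
-/

section GroupAverages

open scoped Function

lemma sum_sum_le_sum_of_pairwise_disjoint {ι κ N : Type*} [Fintype ι] [Fintype κ]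
    [AddCommMonoid N] [PartialOrder N] [IsOrderedAddMonoid N] {G : κ → Finset ι} {h : ι → N}
    (hG : Pairwise (Disjoint on G)) (hh : ∀ i, 0 ≤ h i) :
    ∑ k, ∑ i ∈ G k, h i ≤ ∑ i, h i := by
  classical
  rw [← sum_biUnion (hG.set_pairwise _)]
  exact sum_le_univ_sum_of_nonneg hh

section Jensen

variable {𝕜 E ι κ : Type*} [Field 𝕜] [LinearOrder 𝕜] [IsStrictOrderedRing 𝕜]
  [AddCommGroup E] [Module 𝕜 E] {C : Set E} {f : E → 𝕜} {g : ι → E}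

lemma card_mul_map_average_le_sum {s : Finset ι} (hf : ConvexOn 𝕜 C f) (hs : s.Nonempty)
    (hg : ∀ i ∈ s, g i ∈ C) :
    #s * f ((#s : 𝕜)⁻¹ • ∑ i ∈ s, g i) ≤ ∑ i ∈ s, f (g i) := by
  have hcard : (0 : 𝕜) < #s := mod_cast hs.card_pos
  have jensen : f ((#s : 𝕜)⁻¹ • ∑ i ∈ s, g i) ≤ (#s : 𝕜)⁻¹ * ∑ i ∈ s, f (g i) := by
    simpa [← smul_sum, ← mul_sum] using
      hf.map_sum_le (w := fun _ ↦ (#s : 𝕜)⁻¹) (fun _ _ ↦ by positivity)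
        (by simp [hcard.ne']) hg
  rwa [le_inv_mul_iff₀ hcard] at jensen

variable [Fintype ι] [Fintype κ] {G : κ → Finset ι} {n : ℕ}

lemma mul_sum_map_average_le_sum (hf : ConvexOn 𝕜 C f) (hf₀ : ∀ i, 0 ≤ f (g i))
    (hg : ∀ i, g i ∈ C) (hG : Pairwise (Disjoint on G)) (hn : 0 < n)
    (hcard : ∀ k, n ≤ #(G k)) :
    n * ∑ k, f ((#(G k) : 𝕜)⁻¹ • ∑ i ∈ G k, g i) ≤ ∑ i, f (g i) := by
  have group_bound (k : κ) :
      n * f ((#(G k) : 𝕜)⁻¹ • ∑ i ∈ G k, g i) ≤ ∑ i ∈ G k, f (g i) := by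
    have jensen := card_mul_map_average_le_sum hf (card_pos.1 (hn.trans_le (hcard k)))
      fun i _ ↦ hg i
    rcases le_total 0 (f ((#(G k) : 𝕜)⁻¹ • ∑ i ∈ G k, g i)) with h | h
    · exact (mul_le_mul_of_nonneg_right (mod_cast hcard k) h).trans jensen
    · exact (mul_nonpos_of_nonneg_of_nonpos n.cast_nonneg h).trans (sum_nonneg fun i _ ↦ hf₀ i)
  calc n * ∑ k, f ((#(G k) : 𝕜)⁻¹ • ∑ i ∈ G k, g i)
      = ∑ k, n * f ((#(G k) : 𝕜)⁻¹ • ∑ i ∈ G k, g i) := mul_sum ..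
    _ ≤ ∑ k, ∑ i ∈ G k, f (g i) := sum_le_sum fun k _ ↦ group_bound k
    _ ≤ ∑ i, f (g i) := sum_sum_le_sum_of_pairwise_disjoint hG hf₀

lemma average_map_average_le_mul_average [Nonempty κ] (hf : ConvexOn 𝕜 C f)
    (hf₀ : ∀ i, 0 ≤ f (g i)) (hg : ∀ i, g i ∈ C) (hG : Pairwise (Disjoint on G)) (hn : 0 < n)
    (hcard : ∀ k, n ≤ #(G k)) :
    (Fintype.card κ : 𝕜)⁻¹ * ∑ k, f ((#(G k) : 𝕜)⁻¹ • ∑ i ∈ G k, g i) ≤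
      Fintype.card ι / (Fintype.card κ * n) * ((Fintype.card ι : 𝕜)⁻¹ * ∑ i, f (g i)) := by
  have hι : (Fintype.card ι : 𝕜) ≠ 0 := by
    obtain ⟨k⟩ := ‹Nonempty κ›
    exact_mod_cast (hn.trans_le ((hcard k).trans (card_le_univ _))).ne'
  have hn' : (0 : 𝕜) < n := mod_cast hn
  calc (Fintype.card κ : 𝕜)⁻¹ * ∑ k, f ((#(G k) : 𝕜)⁻¹ • ∑ i ∈ G k, g i)
      ≤ (Fintype.card κ : 𝕜)⁻¹ * ((n : 𝕜)⁻¹ * ∑ i, f (g i)) := by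
        gcongr
        rw [le_inv_mul_iff₀ hn']
        exact mul_sum_map_average_le_sum hf hf₀ hg hG hn hcard
    _ = Fintype.card ι / (Fintype.card κ * n) * ((Fintype.card ι : 𝕜)⁻¹ * ∑ i, f (g i)) := by
        field_simp

end Jensen

section Norm

variable {E : Type*} [SeminormedAddCommGroup E] [NormedSpace ℝ E]

lemma convexOn_norm_sub_pow {s : Set E} (hs : Convex ℝ s) (c : E) (p : ℕ) :
    ConvexOn ℝ s fun x ↦ ‖x - c‖ ^ p := by
  simp only [← dist_eq_norm]
  exact (convexOn_dist c hs).pow (fun _ _ ↦ dist_nonneg) p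

theorem inter_group_heterogeneity_constants_exist_general {ι κ : Type*} [Fintype ι] [Fintype κ]
    [Nonempty κ] (g : ι → E) (c : E) {G : κ → Finset ι}
    (hG : Pairwise (Disjoint on G)) {n : ℕ} (hn : 0 < n) (hcard : ∀ k, n ≤ #(G k))
    {β ζ : ℝ} (hβ : 0 ≤ β) (hζ : 0 ≤ ζ)
    (hglobal : (Fintype.card ι : ℝ)⁻¹ * ∑ i, ‖g i - c‖ ^ 2 ≤ β ^ 2 * ‖c‖ ^ 2 + ζ ^ 2) :
    ∃ βg ζg : ℝ, 0 ≤ βg ∧ 0 ≤ ζg ∧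
      βg ^ 2 ≤ Fintype.card ι * β ^ 2 / (Fintype.card κ * n) ∧
      ζg ^ 2 ≤ Fintype.card ι * ζ ^ 2 / (Fintype.card κ * n) ∧
      (Fintype.card κ : ℝ)⁻¹ * ∑ k, ‖(#(G k) : ℝ)⁻¹ • ∑ i ∈ G k, g i - c‖ ^ 2 ≤
        βg ^ 2 * ‖c‖ ^ 2 + ζg ^ 2 := by
  set r : ℝ := Fintype.card ι / (Fintype.card κ * n) with hr
  have sq_scaled (x : ℝ) : (√r * x) ^ 2 = r * x ^ 2 := by
    rw [mul_pow, Real.sq_sqrt (by positivity)]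
  refine ⟨√r * β, √r * ζ, by positivity, by positivity, ?_, ?_, ?_⟩
  · rw [sq_scaled, hr, div_mul_eq_mul_div]
  · rw [sq_scaled, hr, div_mul_eq_mul_div]
  · calc (Fintype.card κ : ℝ)⁻¹ * ∑ k, ‖(#(G k) : ℝ)⁻¹ • ∑ i ∈ G k, g i - c‖ ^ 2
        ≤ r * ((Fintype.card ι : ℝ)⁻¹ * ∑ i, ‖g i - c‖ ^ 2) :=
          average_map_average_le_mul_average (convexOn_norm_sub_pow convex_univ c 2)
            (fun _ ↦ by positivity) (fun _ ↦ Set.mem_univ _) hG hn hcard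
      _ ≤ r * (β ^ 2 * ‖c‖ ^ 2 + ζ ^ 2) := by gcongr
      _ = (√r * β) ^ 2 * ‖c‖ ^ 2 + (√r * ζ) ^ 2 := by rw [sq_scaled, sq_scaled]; ring

end Norm

end GroupAverages

/-- **Corollary of Lemma 2.** Under the global heterogeneity bound, there exist
nonnegative inter-group heterogeneity constants `β_g, ζ_g` with
`β_g² ≤ Mβ²/(K M_min)` and `ζ_g² ≤ Mζ²/(K M_min)` such that
`(1/K) Σ_k ‖ḡ_k − ḡ‖² ≤ β_g²‖ḡ‖² + ζ_g²`. -/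
theorem inter_group_heterogeneity_constants_exist
    {E : Type*} [NormedAddCommGroup E] [InnerProductSpace ℝ E]
    {M K : ℕ} (hM : 0 < M) (hK : 0 < K)
    (g : Fin M → E)
    (G : Fin K → Finset (Fin M))
    (hdisj : ∀ k k' : Fin K, k ≠ k' → Disjoint (G k) (G k'))
    (hcover : ∀ m : Fin M, ∃ k, m ∈ G k)
    (hne : ∀ k, (G k).Nonempty)
    (gbar : E) (hgbar : gbar = (M : ℝ)⁻¹ • ∑ m, g m)
    (gk : Fin K → E)
    (hgk : ∀ k, gk k = ((G k).card : ℝ)⁻¹ • ∑ m ∈ G k, g m)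
    (Mmin : ℕ) (hMminpos : 0 < Mmin)
    (hMmin_le : ∀ k, Mmin ≤ (G k).card)
    (hMmin_attained : ∃ k, (G k).card = Mmin)
    (β ζ : ℝ) (hβ : 0 ≤ β) (hζ : 0 ≤ ζ)
    (hglobal : (M : ℝ)⁻¹ * ∑ m, ‖g m - gbar‖ ^ 2 ≤ β ^ 2 * ‖gbar‖ ^ 2 + ζ ^ 2) :
    ∃ βg ζg : ℝ, 0 ≤ βg ∧ 0 ≤ ζg ∧
      βg ^ 2 ≤ (M : ℝ) * β ^ 2 / ((K : ℝ) * (Mmin : ℝ)) ∧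
      ζg ^ 2 ≤ (M : ℝ) * ζ ^ 2 / ((K : ℝ) * (Mmin : ℝ)) ∧
      (K : ℝ)⁻¹ * ∑ k, ‖gk k - gbar‖ ^ 2 ≤ βg ^ 2 * ‖gbar‖ ^ 2 + ζg ^ 2 := by
  have : Nonempty (Fin K) := Fin.pos_iff_nonempty.1 hK
  simpa [hgk] using inter_group_heterogeneity_constants_exist_general g gbar hdisj hMminpos
    hMmin_le hβ hζ (by simpa using hglobal)
end
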